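/- Let H be a nilpotent group and K a proper subgroup of H (K ≠ H). Then there exist an abelian group G and a group homomorphism φ : H → G such that φ is surjective, φ is not the trivial homomorphism, and K is contained in the kernel of φ. -/

import Mathlib

/-!
In a nilpotent group `H` every subgroup is subnormal, so the proper subgroup `K` lies in a proper
normal subgroup `N`. The nontrivial group `H ⧸ N` is solvable, hence not perfect, and `φ` is the
composite `H → H ⧸ N → (H ⧸ N)ᵃᵇ`.
-/

theorem isSubnormal_of_isSubnormal_sup_center {G : Type*} [Group G] {K : Subgroup G}
    (hK : (K ⊔ Subgroup.center G).IsSubnormal) : K.IsSubnormal := by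
  refine .step K _ le_sup_left hK ?_
  rw [Subgroup.normal_subgroupOf_iff_le_normalizer le_sup_left]
  exact sup_le Subgroup.le_normalizer (Subgroup.center_le_normalizer _)

theorem isSubnormal_of_isNilpotent {G : Type*} [Group G] [Group.IsNilpotent G]
    (K : Subgroup G) : K.IsSubnormal := by
  refine Group.nilpotent_center_quotient_ind
    (P := fun G _ _ => ∀ K : Subgroup G, K.IsSubnormal) G ?trivial ?centralQuotient K
  case trivial =>
    intro G _ _ K
    exact .of_subsingleton
  case centralQuotient =>
    intro G _ _ ih K
    apply isSubnormal_of_isSubnormal_sup_center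
    have hpreimage := (ih (K.map (QuotientGroup.mk' (Subgroup.center G)))).comap
      (QuotientGroup.mk' (Subgroup.center G))
    rwa [Subgroup.comap_map_eq, QuotientGroup.ker_mk'] at hpreimage

theorem nontrivial_abelianization_of_isSolvable (G : Type*) [Group G] [Group.IsSolvable G]
    [Nontrivial G] : Nontrivial (Abelianization G) :=
  QuotientGroup.nontrivial_iff.mpr (Group.IsSolvable.commutator_lt_top_of_nontrivial G).ne

theorem exists_surjective_nontrivial_hom_to_abelian_of_ne_top_general
    {H : Type u} [Group H] [Group.IsSolvable H]
    {K : Subgroup H} (hsub : K.IsSubnormal) (hK : K ≠ ⊤) :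
    ∃ (G : Type u) (inst : CommGroup G),
      letI := inst
      ∃ φ : H →* G, Function.Surjective φ ∧ φ ≠ 1 ∧ K ≤ φ.ker := by
  obtain ⟨N, hN, hKN, hN_lt⟩ := hsub.exists_normal_and_le_and_lt_top_of_ne hK
  have : Nontrivial (H ⧸ N) := QuotientGroup.nontrivial_iff.mpr hN_lt.ne
  have := nontrivial_abelianization_of_isSolvable (H ⧸ N)
  let φ : H →* Abelianization (H ⧸ N) := Abelianization.of.comp (QuotientGroup.mk' N)
  have hφ : Function.Surjective φ :=
    (QuotientGroup.mk'_surjective _).comp (QuotientGroup.mk'_surjective N)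
  have hφ_ne : φ ≠ 1 := by
    rw [ne_eq, ← MonoidHom.range_eq_bot_iff, MonoidHom.range_eq_top.mpr hφ]
    exact top_ne_bot
  have hKφ : K ≤ φ.ker := calc
    K ≤ (QuotientGroup.mk' N).ker := by rwa [QuotientGroup.ker_mk']
    _ ≤ Abelianization.of.ker.comap (QuotientGroup.mk' N) := Subgroup.ker_le_comap _ _
    _ = φ.ker := MonoidHom.comap_ker _ _
  exact ⟨_, inferInstance, φ, hφ, hφ_ne, hKφ⟩

/-- If `K` is a proper subgroup of a nilpotent group `H`, then there is a surjective, nontrivial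
homomorphism `φ` from `H` to an abelian group `G` with `K` contained in the kernel of `φ`. -/
theorem exists_surjective_nontrivial_hom_to_abelian_of_ne_top
    {H : Type u} [Group H] [Group.IsNilpotent H]
    (K : Subgroup H) (hK : K ≠ ⊤) :
    ∃ (G : Type u) (inst : CommGroup G),
      letI := inst
      ∃ φ : H →* G, Function.Surjective φ ∧ φ ≠ 1 ∧ K ≤ φ.ker :=
  exists_surjective_nontrivial_hom_to_abelian_of_ne_top_general (isSubnormal_of_isNilpotent K) hK
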